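/- arXiv:1610.03675 — 2 statements merged into one kernel-verified Lean document; each statement's English description precedes it below -/
import Mathlib

section
/- Assume the bilinear form a is symmetric, ι is injective, compact, and has dense range, H is separable, and V is infinite dimensional. Then there exist a nondecreasing sequence (λ_k)_{k∈ℕ} of positive real numbers with λ_k → +∞ and elements u_k ∈ V satisfying a(u_k, v) = λ_k ⟨ι u_k, ι v⟩_H for all v ∈ V, such that the family (ι u_k)_{k∈ℕ} is a Hilbert (orthonormal) basis of H. -/
open scoped RealInnerProductSpace

/-!
By Lax–Milgram the problem `a (S f) v = ⟪f, ι v⟫` has a bounded solution operator `S : H → V`.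
Symmetry of `a` makes the compact operator `ι ∘ S` self-adjoint on `H`, and density of `range ι`
makes it injective. Hence `H` has a Hilbert basis of eigenvectors `ι (S e) = μ • e` with `μ ≠ 0`,
and each of them yields the eigenpair `(μ⁻¹, μ⁻¹ • S e)`. By coercivity an eigenpair `(λ, u)`
satisfies `C ‖u‖² ≤ λ ‖ι u‖²`; as an infinite orthonormal family leaves every compact set,
compactness of `ι` forces `‖u‖ → ∞`, and with it `λ → ∞`, along the basis, so that the eigenvalues
can be sorted.
-/

open Filter Bornology

section Enumeration

theorem nonempty_orderIso_nat (J : Type*) [LinearOrder J] [LocallyFiniteOrderBot J] [Infinite J] :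
    Nonempty (ℕ ≃o J) := by
  classical
  have hcard : StrictMono fun j : J => (Finset.Iio j).card :=
    fun _ _ hij => Finset.card_lt_card (Finset.Iio_ssubset_Iio hij)
  have : Infinite (Set.range fun j : J => (Finset.Iio j).card) :=
    (Set.infinite_range_of_injective hcard.injective).to_subtype
  exact ⟨(Nat.Subtype.orderIsoOfNat _).trans (hcard.orderIso _).symm⟩

theorem exists_equiv_nat_monotone_of_injective_of_northcott {J α : Type*} [Infinite J]
    [LinearOrder α] {f : J → α} (hf : Function.Injective f) [Northcott f] :
    ∃ e : ℕ ≃ J, Monotone (f ∘ e) := by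
  classical
  let : LinearOrder J := LinearOrder.lift' f hf
  let : LocallyFiniteOrderBot J := LocallyFiniteOrderBot.ofIic J
    (fun j => (Northcott.finite_le (h := f) (f j)).toFinset) (fun _ _ => Set.Finite.mem_toFinset _)
  obtain ⟨e⟩ := nonempty_orderIso_nat J
  exact ⟨e.toEquiv, fun _ _ hmn => e.monotone hmn⟩

theorem exists_equiv_nat_monotone_of_northcott {J α : Type*} [Infinite J] [LinearOrder α]
    (f : J → α) [Northcott f] : ∃ e : ℕ ≃ J, Monotone (f ∘ e) := by
  classical
  -- Ties of `f` are broken by an arbitrary linear order on `J`.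
  let : LinearOrder J := linearOrderOfSTO WellOrderingRel
  let key : J → α ×ₗ J := fun j => toLex (f j, j)
  have key_injective : Function.Injective key := fun _ _ hij => congrArg (fun p => (ofLex p).2) hij
  have : Northcott key :=
    ⟨fun p => (Northcott.finite_le (h := f) (ofLex p).1).subset
      fun _ hj => Prod.Lex.monotone_fst _ _ hj⟩
  obtain ⟨e, he⟩ := exists_equiv_nat_monotone_of_injective_of_northcott key_injective
  exact ⟨e, fun _ _ hmn => Prod.Lex.monotone_fst _ _ (he hmn)⟩

end Enumeration

section CompactOperators

variable {𝕜 E : Type*} [RCLike 𝕜] [NormedAddCommGroup E] [InnerProductSpace 𝕜 E]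

theorem one_le_dist_of_orthonormal {J : Type*} {e : J → E} (he : Orthonormal 𝕜 e) {i j : J}
    (hij : i ≠ j) : 1 ≤ dist (e i) (e j) := by
  have hsq : ‖e i - e j‖ ^ 2 = 2 := by
    rw [@norm_sub_sq 𝕜, he.2 hij, he.1, he.1]
    norm_num
  rw [dist_eq_norm]
  nlinarith [norm_nonneg (e i - e j)]

theorem tendsto_cofinite_cocompact_of_orthonormal {J : Type*} {e : J → E}
    (he : Orthonormal 𝕜 e) : Tendsto e cofinite (cocompact E) := by
  let : TopologicalSpace J := ⊥
  have : DiscreteTopology J := ⟨rfl⟩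
  exact tendsto_cofinite_cocompact_of_discrete
    (Metric.isClosedEmbedding_of_pairwise_le_dist one_pos
      fun _ _ hij => one_le_dist_of_orthonormal he hij).tendsto_cocompact

theorem comap_cocompact_le_cobounded_of_isCompactOperator {𝕜₁ 𝕜₂ V F : Type*}
    [NontriviallyNormedField 𝕜₁] [SeminormedRing 𝕜₂] {σ : 𝕜₁ →+* 𝕜₂} [SeminormedAddCommGroup V]
    [NormedSpace 𝕜₁ V] [TopologicalSpace F] [AddCommMonoid F] [Module 𝕜₂ F]
    [ContinuousConstSMul 𝕜₂ F] {f : V →ₛₗ[σ] F} (hf : IsCompactOperator f) :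
    comap f (cocompact F) ≤ cobounded V := by
  intro s hs
  obtain ⟨K, hK, himage⟩ := hf.image_subset_compact_of_bounded (isBounded_compl_iff.2 hs)
  refine ⟨Kᶜ, hK.compl_mem_cocompact, fun v hv => ?_⟩
  by_contra hvs
  exact hv (himage ⟨v, hvs, rfl⟩)

theorem iSup_le_topologicalClosure_span_sigma {ι : Type*} {F : ι → Submodule 𝕜 E}
    {w : ι → Type*} (b : ∀ i, HilbertBasis (w i) 𝕜 (F i)) :
    ⨆ i, F i ≤
      (Submodule.span 𝕜 (Set.range fun j : Σ i, w i => (b j.1 j.2 : E))).topologicalClosure := by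
  refine iSup_le fun i => ?_
  calc F i = (Submodule.span 𝕜 (Set.range (b i))).topologicalClosure.map (F i).subtype := by
        rw [(b i).dense_span, Submodule.map_subtype_top]
    _ ≤ ((Submodule.span 𝕜 (Set.range (b i))).map (F i).subtype).topologicalClosure :=
        Submodule.topologicalClosure_map (F i).subtypeL _
    _ ≤ _ := by
        rw [Submodule.map_span, ← Set.range_comp]
        refine Submodule.topologicalClosure_mono (Submodule.span_mono ?_)
        rintro _ ⟨k, rfl⟩
        exact ⟨⟨i, k⟩, rfl⟩

theorem exists_hilbertBasis_eigenvectors.{u, v} {𝕜 : Type u} {E : Type v} [RCLike 𝕜]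
    [NormedAddCommGroup E] [InnerProductSpace 𝕜 E] [CompleteSpace E] {T : E →L[𝕜] E}
    (hT : IsCompactOperator T) (hsymm : T.IsSymmetric) :
    ∃ (J : Type (max u v)) (b : HilbertBasis J 𝕜 E) (μ : J → 𝕜), ∀ j, T (b j) = μ j • b j := by
  let F : 𝕜 → Submodule 𝕜 E := Module.End.eigenspace (T : Module.End 𝕜 E)
  have hclosed (μ : 𝕜) : IsClosed (F μ : Set E) := by
    convert! isClosed_eq T.continuous (continuous_const_smul μ) using 1
    ext x
    exact Module.End.mem_eigenspace_iff
  have (μ : 𝕜) : CompleteSpace (F μ) := (hclosed μ).completeSpace_coe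
  choose w b _ using fun μ => exists_hilbertBasis 𝕜 (F μ)
  have hortho : Orthonormal 𝕜 fun j : Σ μ, w μ => (b j.1 j.2 : E) :=
    hsymm.orthogonalFamily_eigenspaces.orthonormal_sigma_orthonormal fun μ => (b μ).orthonormal
  have htotal : (Submodule.span 𝕜 (Set.range fun j : Σ μ, w μ => (b j.1 j.2 : E)))ᗮ = ⊥ := by
    rw [← Submodule.orthogonal_closure, eq_bot_iff,
      ← ContinuousLinearMap.orthogonalComplement_iSup_eigenspaces_eq_bot hT hsymm]
    exact Submodule.orthogonal_le (iSup_le_topologicalClosure_span_sigma b)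
  refine ⟨Σ μ, w μ, HilbertBasis.mkOfOrthogonalEqBot hortho htotal, Sigma.fst, fun j => ?_⟩
  rw [HilbertBasis.coe_mkOfOrthogonalEqBot]
  exact Module.End.mem_eigenspace_iff.1 (b j.1 j.2).2

theorem infinite_of_hilbertBasis {J : Type*} (b : HilbertBasis J 𝕜 E)
    (hE : ¬ FiniteDimensional 𝕜 E) : Infinite J := by
  refine not_finite_iff_infinite.1 fun _ => ?_
  have := Fintype.ofFinite J
  exact hE (Module.Finite.of_basis b.toOrthonormalBasis.toBasis)

end CompactOperators

section VariationalEigenvalueProblem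

variable {V H : Type*} [NormedAddCommGroup V] [InnerProductSpace ℝ V]
  [NormedAddCommGroup H] [InnerProductSpace ℝ H] {ι : V →L[ℝ] H} {a : V →L[ℝ] V →L[ℝ] ℝ}

theorem apply_self_pos_of_isCoercive (ha : IsCoercive a) {v : V} (hv : v ≠ 0) : 0 < a v v := by
  obtain ⟨C, hC, hbound⟩ := ha
  have hnorm : 0 < ‖v‖ := norm_pos_iff.2 hv
  exact (mul_pos (mul_pos hC hnorm) hnorm).trans_le (hbound v)

/-- The pair `(lam, u)` solves the variational eigenvalue problem for the form `a` and the
embedding `ι`; as usual for eigenvectors, `u` is required to be nonzero. -/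
structure IsVariationalEigenpair (ι : V →L[ℝ] H) (a : V →L[ℝ] V →L[ℝ] ℝ) (lam : ℝ) (u : V) :
    Prop where
  ne_zero : u ≠ 0
  apply_eq : ∀ v, a u v = lam * ⟪ι u, ι v⟫

namespace IsVariationalEigenpair

theorem apply_self {lam : ℝ} {u : V} (h : IsVariationalEigenpair ι a lam u) :
    a u u = lam * ‖ι u‖ ^ 2 := by
  rw [h.apply_eq, real_inner_self_eq_norm_sq]

theorem pos (ha : IsCoercive a) {lam : ℝ} {u : V} (h : IsVariationalEigenpair ι a lam u) :
    0 < lam := by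
  have henergy : 0 < lam * ‖ι u‖ ^ 2 := h.apply_self ▸ apply_self_pos_of_isCoercive ha h.ne_zero
  exact pos_of_mul_pos_left henergy (sq_nonneg _)

theorem tendsto_cofinite_atTop (ha : IsCoercive a) (hι : IsCompactOperator ι) {J : Type*}
    {lam : J → ℝ} {u : J → V} (h : ∀ j, IsVariationalEigenpair ι a (lam j) (u j))
    (hortho : Orthonormal ℝ fun j => ι (u j)) : Tendsto lam cofinite atTop := by
  obtain ⟨C, hC, hbound⟩ := ha
  have hnorm : Tendsto (fun j => ‖u j‖) cofinite atTop :=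
    tendsto_norm_cobounded_atTop.comp <| (tendsto_comap_iff.2
      (tendsto_cofinite_cocompact_of_orthonormal hortho)).mono_right
        (comap_cocompact_le_cobounded_of_isCompactOperator (f := (ι : V →ₗ[ℝ] H)) hι)
  refine tendsto_atTop_mono (fun j => ?_)
    ((hnorm.const_mul_atTop hC).atTop_mul_atTop₀ hnorm)
  calc C * ‖u j‖ * ‖u j‖ ≤ a (u j) (u j) := hbound (u j)
    _ = lam j := by rw [(h j).apply_self, hortho.1 j, one_pow, mul_one]

end IsVariationalEigenpair

variable [CompleteSpace V] [CompleteSpace H]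

/-- The solution operator `S : H → V` of the variational problem `a (S f) v = ⟪f, ι v⟫`, given by
the Lax–Milgram theorem. -/
noncomputable def solutionOperator (ι : V →L[ℝ] H) (ha : IsCoercive a) : H →L[ℝ] V :=
  (ha.continuousLinearEquivOfBilin.symm : V →L[ℝ] V) ∘L ContinuousLinearMap.adjoint ι

theorem apply_solutionOperator (ha : IsCoercive a) (f : H) (v : V) :
    a (solutionOperator ι ha f) v = ⟪f, ι v⟫ := by
  rw [← ha.continuousLinearEquivOfBilin_apply, ← ContinuousLinearMap.adjoint_inner_left]
  simp [solutionOperator]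

theorem isSymmetric_comp_solutionOperator (ha : IsCoercive a) (hsymm : ∀ u v, a u v = a v u) :
    (ι ∘L solutionOperator ι ha).IsSymmetric := by
  intro f g
  calc ⟪ι (solutionOperator ι ha f), g⟫
      = a (solutionOperator ι ha g) (solutionOperator ι ha f) := by
        rw [apply_solutionOperator, real_inner_comm]
    _ = a (solutionOperator ι ha f) (solutionOperator ι ha g) := hsymm _ _
    _ = ⟪f, ι (solutionOperator ι ha g)⟫ := apply_solutionOperator ha f _

theorem eq_zero_of_comp_solutionOperator_eq_zero (ha : IsCoercive a) (hι : DenseRange ι) {f : H}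
    (hf : ι (solutionOperator ι ha f) = 0) : f = 0 := by
  have hSf : solutionOperator ι ha f = 0 := by
    by_contra hne
    have henergy := apply_self_pos_of_isCoercive ha hne
    rw [apply_solutionOperator, hf, inner_zero_right] at henergy
    exact henergy.false
  have horth (v : V) : ⟪f, ι v⟫ = 0 := by
    rw [← apply_solutionOperator ha, hSf, map_zero, zero_apply]
  exact hι.eq_zero_of_inner_left (𝕜 := ℝ) horth

theorem map_inv_smul_solutionOperator (ha : IsCoercive a) {μ : ℝ} (hμ : μ ≠ 0) {f : H}
    (hf : ι (solutionOperator ι ha f) = μ • f) : ι (μ⁻¹ • solutionOperator ι ha f) = f := by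
  rw [map_smul, hf, inv_smul_smul₀ hμ]

theorem isVariationalEigenpair_inv_smul_solutionOperator (ha : IsCoercive a) {μ : ℝ} (hμ : μ ≠ 0)
    {f : H} (hf₀ : f ≠ 0) (hf : ι (solutionOperator ι ha f) = μ • f) :
    IsVariationalEigenpair ι a μ⁻¹ (μ⁻¹ • solutionOperator ι ha f) where
  ne_zero h := hf₀ (by rw [← map_inv_smul_solutionOperator ha hμ hf, h, map_zero])
  apply_eq v := by
    rw [map_inv_smul_solutionOperator ha hμ hf, map_smul, smul_apply,
      apply_solutionOperator, smul_eq_mul]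

theorem exists_hilbertBasis_isVariationalEigenpair.{u} {H : Type u} [NormedAddCommGroup H]
    [InnerProductSpace ℝ H] [CompleteSpace H] {ι : V →L[ℝ] H} (ha : IsCoercive a)
    (hsymm : ∀ u v, a u v = a v u) (hcompact : IsCompactOperator ι) (hdense : DenseRange ι) :
    ∃ (J : Type u) (b : HilbertBasis J ℝ H) (lam : J → ℝ) (u : J → V),
      (∀ j, ι (u j) = b j) ∧ ∀ j, IsVariationalEigenpair ι a (lam j) (u j) := by
  obtain ⟨J, b, μ, hb⟩ := exists_hilbertBasis_eigenvectors
    (hcompact.comp_clm (solutionOperator ι ha)) (isSymmetric_comp_solutionOperator ha hsymm)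
  have hb₀ (j : J) : b j ≠ 0 := b.orthonormal.ne_zero j
  have hμ (j : J) : μ j ≠ 0 := fun h =>
    hb₀ j (eq_zero_of_comp_solutionOperator_eq_zero ha hdense ((hb j).trans (by rw [h, zero_smul])))
  exact ⟨J, b, fun j => (μ j)⁻¹, fun j => (μ j)⁻¹ • solutionOperator ι ha (b j),
    fun j => map_inv_smul_solutionOperator ha (hμ j) (hb j),
    fun j => isVariationalEigenpair_inv_smul_solutionOperator ha (hμ j) (hb₀ j) (hb j)⟩

theorem stmt6_general (ha : IsCoercive a) (hsymm : ∀ u v, a u v = a v u)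
    (hcompact : IsCompactOperator ι) (hdense : DenseRange ι) (hinf : ¬ FiniteDimensional ℝ H) :
    ∃ (lam : ℕ → ℝ) (u : ℕ → V),
      Monotone lam ∧
      (∀ k, 0 < lam k) ∧
      Tendsto lam atTop atTop ∧
      (∀ k, ∀ v : V, a (u k) v = lam k * ⟪ι (u k), ι v⟫) ∧
      Orthonormal ℝ (fun k => ι (u k)) ∧
      (Submodule.span ℝ (Set.range fun k => ι (u k))).topologicalClosure = ⊤ := by
  obtain ⟨J, b, lam, u, hu, hpair⟩ :=
    exists_hilbertBasis_isVariationalEigenpair ha hsymm hcompact hdense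
  have hιu : (fun j => ι (u j)) = b := funext hu
  have hlam : Tendsto lam cofinite atTop :=
    IsVariationalEigenpair.tendsto_cofinite_atTop ha hcompact hpair (hιu ▸ b.orthonormal)
  have := infinite_of_hilbertBasis b hinf
  have := (northcott_iff_tendsto lam).2 hlam
  obtain ⟨e, he⟩ := exists_equiv_nat_monotone_of_northcott lam
  refine ⟨lam ∘ e, u ∘ e, he, fun k => (hpair (e k)).pos ha, ?_,
    fun k => (hpair (e k)).apply_eq, ?_, ?_⟩
  · exact hlam.comp (Nat.cofinite_eq_atTop ▸ e.injective.tendsto_cofinite)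
  · simpa only [Function.comp_apply, hu] using! b.orthonormal.comp e e.injective
  · simp only [Function.comp_apply, hu]
    rw [← b.dense_span, ← e.surjective.range_comp b]
    rfl

end VariationalEigenvalueProblem

/-- Assume `a` is symmetric, `ι` injective, compact with dense range,
`H` separable and `V` infinite dimensional.  Then there are a nondecreasing sequence
`(λ_k)` of positive reals diverging to `+∞` and elements `u_k ∈ V` solving the
variational eigenvalue problem `a (u_k) v = λ_k ⟪ι u_k, ι v⟫` for all `v`, such that
`(ι u_k)` is a Hilbert (orthonormal) basis of `H`, i.e. it is an orthonormal family
whose span is dense in `H`. -/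
theorem stmt6
    {V H : Type*}
    [NormedAddCommGroup V] [InnerProductSpace ℝ V] [CompleteSpace V]
    [NormedAddCommGroup H] [InnerProductSpace ℝ H] [CompleteSpace H]
    [TopologicalSpace.SeparableSpace H]
    (ι : V →L[ℝ] H) (a : V →L[ℝ] V →L[ℝ] ℝ)
    (α : ℝ) (hα : 0 < α) (hcoer : ∀ v : V, α * ‖v‖ ^ 2 ≤ a v v)
    (hsymm : ∀ u v : V, a u v = a v u)
    (hinj : Function.Injective ι)
    (hcompact : IsCompactOperator ι)
    (hdense : DenseRange ι)
    (hinf : ¬ FiniteDimensional ℝ V) :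
    ∃ (lam : ℕ → ℝ) (u : ℕ → V),
      Monotone lam ∧
      (∀ k, 0 < lam k) ∧
      Filter.Tendsto lam Filter.atTop Filter.atTop ∧
      (∀ k, ∀ v : V, a (u k) v = lam k * ⟪ι (u k), ι v⟫) ∧
      Orthonormal ℝ (fun k => ι (u k)) ∧
      (Submodule.span ℝ (Set.range fun k => ι (u k))).topologicalClosure = ⊤ :=
  stmt6_general ⟨α, hα, fun v => by simpa only [sq, mul_assoc] using hcoer v⟩ hsymm hcompact hdense
    fun _ => hinf (FiniteDimensional.of_injective (ι : V →ₗ[ℝ] H) hinj)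
end

section
/- Let T and (T_n)_{n∈ℕ} be bounded self-adjoint operators on a nontrivial complex Hilbert space H with ‖T_n − T‖ → 0 as n → ∞. Then the (real) spectra converge in the Hausdorff metric: hausdorffDist(spectrum(T_n), spectrum(T)) → 0. In particular every spectral point of T is a limit of spectral points of T_n, and no spurious spectral points appear: sup_{ν ∈ spectrum(T_n)} dist(ν, spectrum(T)) → 0. -/
open Filter

/-!
The continuous functional calculus of an element `a` turns the resolvent at `ν` into the function
`z ↦ (ν - z)⁻¹` on the spectrum, so its norm is at most the inverse of the distance from `ν` to the
spectrum. A Neumann series then shows that a perturbation of `a` of norm less than that distance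
keeps `ν` in the resolvent set: spectral points of `b` lie within `‖b - a‖` of the spectrum of `a`.
Exchanging `a` and `b` bounds the Hausdorff distance of the two spectra by `‖b - a‖`.
-/

section NormedAlgebra

variable {𝕜 A : Type*} [NormedField 𝕜] [NormedRing A] [NormedAlgebra 𝕜 A]
  [HasSummableGeomSeries A]

theorem mem_resolventSet_of_norm_resolvent_mul_lt_one {a b : A} {ν : 𝕜}
    (hν : ν ∈ resolventSet 𝕜 a) (hab : ‖resolvent a ν‖ * ‖b - a‖ < 1) :
    ν ∈ resolventSet 𝕜 b := by
  have factorization : algebraMap 𝕜 A ν - b =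
      (algebraMap 𝕜 A ν - a) * (1 - resolvent a ν * (b - a)) := by
    have cancel : (algebraMap 𝕜 A ν - a) * resolvent a ν = 1 := Ring.mul_inverse_cancel _ hν
    rw [mul_sub, mul_one, ← mul_assoc, cancel, one_mul, sub_sub_sub_cancel_right]
  rw [spectrum.mem_resolventSet_iff, factorization]
  exact hν.mul (isUnit_one_sub_of_norm_lt_one ((norm_mul_le _ _).trans_lt hab))

end NormedAlgebra

section FunctionalCalculus

variable {𝕜 A : Type*} {p : A → Prop} [RCLike 𝕜] [NormedRing A] [StarRing A] [NormedAlgebra 𝕜 A]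

theorem resolvent_eq_cfc [ContinuousFunctionalCalculus 𝕜 A p] {a : A} (ha : p a) {ν : 𝕜}
    (hν : ν ∈ resolventSet 𝕜 a) : resolvent a ν = cfc (fun z => (ν - z)⁻¹) a := by
  have sub_ne_zero_on_spectrum : ∀ z ∈ spectrum 𝕜 a, ν - z ≠ 0 := by
    rintro z hz hνz
    exact hz (sub_eq_zero.mp hνz ▸ hν)
  rw [cfc_inv _ a sub_ne_zero_on_spectrum, cfc_sub (fun _ => ν) (fun z => z) a, cfc_const ν a,
    cfc_id' 𝕜 a, resolvent]

variable [IsometricContinuousFunctionalCalculus 𝕜 A p]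

theorem norm_resolvent_le_inv_infDist_spectrum {a : A} (ha : p a) {ν : 𝕜}
    (hν : ν ∈ resolventSet 𝕜 a) :
    ‖resolvent a ν‖ ≤ (Metric.infDist ν (spectrum 𝕜 a))⁻¹ := by
  rw [resolvent_eq_cfc ha hν]
  refine norm_cfc_le (inv_nonneg.mpr Metric.infDist_nonneg) fun z hz => ?_
  have spectrum_closed : IsClosed (spectrum 𝕜 a) :=
    (ContinuousFunctionalCalculus.isCompact_spectrum a).isClosed
  have infDist_pos : 0 < Metric.infDist ν (spectrum 𝕜 a) :=
    (spectrum_closed.notMem_iff_infDist_pos ⟨z, hz⟩).mp (not_not_intro hν)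
  rw [norm_inv, ← dist_eq_norm]
  exact inv_anti₀ infDist_pos (Metric.infDist_le_dist_of_mem hz)

variable [HasSummableGeomSeries A]

theorem infDist_spectrum_le_norm_sub {a b : A} (ha : p a) {ν : 𝕜} (hν : ν ∈ spectrum 𝕜 b) :
    Metric.infDist ν (spectrum 𝕜 a) ≤ ‖b - a‖ := by
  by_contra! hlt
  have infDist_pos : 0 < Metric.infDist ν (spectrum 𝕜 a) := (norm_nonneg _).trans_lt hlt
  have mem_resolventSet : ν ∈ resolventSet 𝕜 a := by
    by_contra hνa
    exact infDist_pos.ne' (Metric.infDist_zero_of_mem hνa)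
  refine hν (mem_resolventSet_of_norm_resolvent_mul_lt_one mem_resolventSet ?_)
  calc ‖resolvent a ν‖ * ‖b - a‖
      ≤ (Metric.infDist ν (spectrum 𝕜 a))⁻¹ * ‖b - a‖ := by
        gcongr
        exact norm_resolvent_le_inv_infDist_spectrum ha mem_resolventSet
    _ < 1 := (inv_mul_lt_one₀ infDist_pos).mpr hlt

variable (𝕜) in
theorem hausdorffDist_spectrum_le_norm_sub {a b : A} (ha : p a) (hb : p b) :
    Metric.hausdorffDist (spectrum 𝕜 b) (spectrum 𝕜 a) ≤ ‖b - a‖ :=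
  Metric.hausdorffDist_le_of_infDist (norm_nonneg _)
    (fun _ hν => infDist_spectrum_le_norm_sub ha hν)
    (fun _ hν => norm_sub_rev a b ▸ infDist_spectrum_le_norm_sub hb hν)

theorem stmt8_general {ι : Type*} {l : Filter ι} {a : A} {aₙ : ι → A} (ha : p a)
    (haₙ : ∀ n, p (aₙ n)) (hconv : Tendsto (fun n => ‖aₙ n - a‖) l (nhds 0)) :
    Tendsto (fun n => Metric.hausdorffDist (spectrum 𝕜 (aₙ n)) (spectrum 𝕜 a)) l (nhds 0) ∧
    ∀ ε : ℝ, 0 < ε → ∀ᶠ n in l,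
      ∀ ν ∈ spectrum 𝕜 (aₙ n), Metric.infDist ν (spectrum 𝕜 a) < ε := by
  refine ⟨squeeze_zero (fun _ => Metric.hausdorffDist_nonneg)
    (fun n => hausdorffDist_spectrum_le_norm_sub 𝕜 ha (haₙ n)) hconv, fun ε hε => ?_⟩
  filter_upwards [hconv.eventually_lt_const hε] with n hn ν hν
  exact (infDist_spectrum_le_norm_sub ha hν).trans_lt hn

end FunctionalCalculus

/-- Let `T` and `(T_n)` be bounded self-adjoint operators on a
nontrivial complex Hilbert space with `‖T_n − T‖ → 0`.  Then the spectra converge in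
the Hausdorff metric, and in particular no spurious spectral points appear: for every
`ε > 0`, eventually every spectral point of `T_n` is within `ε` of the spectrum of `T`. -/
theorem stmt8
    {H : Type*} [NormedAddCommGroup H] [InnerProductSpace ℂ H] [CompleteSpace H]
    [Nontrivial H]
    (T : H →L[ℂ] H) (Tn : ℕ → H →L[ℂ] H)
    (hT : IsSelfAdjoint T) (hTn : ∀ n, IsSelfAdjoint (Tn n))
    (hconv : Tendsto (fun n => ‖Tn n - T‖) atTop (nhds 0)) :
    Tendsto (fun n => Metric.hausdorffDist (spectrum ℂ (Tn n)) (spectrum ℂ T))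
        atTop (nhds 0) ∧
    ∀ ε : ℝ, 0 < ε → ∀ᶠ n in atTop,
      ∀ ν ∈ spectrum ℂ (Tn n), Metric.infDist ν (spectrum ℂ T) < ε :=
  stmt8_general hT.isStarNormal (fun n => (hTn n).isStarNormal) hconv
end
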